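/- arXiv:1009.2939 — 5 statements merged into one kernel-verified Lean document; each statement's English description precedes it below -/
import Mathlib

section
/- Let f : ℝ → ℝ be a function, let s ⊆ ℝ be a set, and let x be a real number. Then the total variation of f on s equals the total variation of t ↦ min(f(t), x) on s plus the total variation of t ↦ max(f(t), x) on s. -/
/-!
Each increment of `f` has absolute value equal to the sum of those of its truncations `min f x` and
`max f x`. Summing over consecutive points gives the identity on finite sets. The variation on `s`
is the directed supremum of the variations on finite subsets of `s`, and in `ℝ≥0∞` directed suprema
commute with addition: two partitions, one for each truncation, have a common refinement.
-/

open Set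

section Additivity

variable {α E F G : Type*} [LinearOrder α] [PseudoEMetricSpace E] [PseudoEMetricSpace F]
  [PseudoEMetricSpace G]

lemma eVariationOn_eq_iSup_finset (f : α → E) (s : Set α) :
    eVariationOn f s = ⨆ t : Finset s, eVariationOn (s.domRestrict f) t := by
  apply le_antisymm
  · refine iSup_le fun ⟨n, u, hu, us⟩ => ?_
    let v (i : ℕ) : s := ⟨u i, us i⟩
    have hv : Monotone v := hu
    refine le_iSup_of_le ((Finset.range (n + 1)).image v) ?_
    exact eVariationOn.sum_le_of_monotoneOn_Iic (f := s.domRestrict f) (hv.monotoneOn _) fun i hi =>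
      Finset.mem_image_of_mem v (Finset.mem_range_succ_iff.2 hi)
  · exact iSup_le fun t => eVariationOn.comp_le_of_monotoneOn f Subtype.val
      ((Subtype.mono_coe _).monotoneOn _) fun a _ => a.2

lemma eVariationOn_insert_of_isGreatest (f : α → E) {s : Set α} {a b : α} (hb : IsGreatest s b)
    (hba : b ≤ a) : eVariationOn f (insert a s) = eVariationOn f s + edist (f b) (f a) := by
  rw [← union_singleton, eVariationOn.union' f hb isLeast_singleton hba,
    eVariationOn.subsingleton f subsingleton_singleton, add_zero]

lemma eVariationOn_finset_eq_add_of_edist_eq_add {f : α → E} {g : α → F} {h : α → G} {t : Finset α}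
    (hfgh : ∀ a ∈ t, ∀ b ∈ t, edist (f a) (f b) = edist (g a) (g b) + edist (h a) (h b)) :
    eVariationOn f t = eVariationOn g t + eVariationOn h t := by
  induction t using Finset.induction_on_max with
  | empty => simp
  | insert a t hlt ih =>
    rcases t.eq_empty_or_nonempty with rfl | ht
    · simp
    have hmax : IsGreatest (t : Set α) (t.max' ht) := t.isGreatest_max' ht
    have hle : t.max' ht ≤ a := (hlt _ (t.max'_mem ht)).le
    have ih' : eVariationOn f t = eVariationOn g t + eVariationOn h t :=
      ih fun b hb c hc => hfgh b (Finset.mem_insert_of_mem hb) c (Finset.mem_insert_of_mem hc)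
    simp only [Finset.coe_insert, eVariationOn_insert_of_isGreatest _ hmax hle]
    rw [ih', hfgh _ (Finset.mem_insert_of_mem (t.max'_mem ht)) _ (Finset.mem_insert_self a t),
      add_add_add_comm]

lemma eVariationOn_eq_add_of_edist_eq_add {f : α → E} {g : α → F} {h : α → G} {s : Set α}
    (hfgh : ∀ a ∈ s, ∀ b ∈ s, edist (f a) (f b) = edist (g a) (g b) + edist (h a) (h b)) :
    eVariationOn f s = eVariationOn g s + eVariationOn h s := by
  simp only [eVariationOn_eq_iSup_finset _ s]
  rw [ENNReal.iSup_add_iSup_of_monotone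
    (fun _ _ htt' => eVariationOn.mono _ (Finset.coe_subset.2 htt'))
    (fun _ _ htt' => eVariationOn.mono _ (Finset.coe_subset.2 htt'))]
  exact iSup_congr fun t => eVariationOn_finset_eq_add_of_edist_eq_add fun a _ b _ =>
    hfgh a a.2 b b.2

end Additivity

lemma edist_eq_min_add_max (a b x : ℝ) :
    edist a b = edist (min a x) (min b x) + edist (max a x) (max b x) := by
  simp only [edist_dist, Real.dist_eq]
  rw [← ENNReal.ofReal_add (abs_nonneg _) (abs_nonneg _), add_comm, abs_sub_sup_add_abs_sub_inf]

theorem eVariationOn_eq_min_add_max_general {α : Type*} [LinearOrder α] (f : α → ℝ) (s : Set α)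
    (x : ℝ) :
    eVariationOn f s =
      eVariationOn (fun t => min (f t) x) s +
        eVariationOn (fun t => max (f t) x) s :=
  eVariationOn_eq_add_of_edist_eq_add fun a _ b _ => edist_eq_min_add_max (f a) (f b) x

/-- Split Lemma (total variation form): the total variation of `f` on `s`
splits exactly at any level `x` into the variation of `min (f t) x` plus the
variation of `max (f t) x`. -/
theorem eVariationOn_eq_min_add_max (f : ℝ → ℝ) (s : Set ℝ) (x : ℝ) :
    eVariationOn f s =
      eVariationOn (fun t => min (f t) x) s +
        eVariationOn (fun t => max (f t) x) s :=
  eVariationOn_eq_min_add_max_general f s x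
end

section
/- Let a < b be real numbers and let f : [a,b] → ℝ be continuous, nowhere constant on [a,b], and such that the set of local extremum points of f on [a,b] is finite. Suppose f has a local minimum on [a,b] at some point of the open interval (a,b), that f attains its global minimum over [a,b] at a, and that f attains either its global minimum or its global maximum over [a,b] at b. Then there exist points s₁ < s₂ < s₃ < s₄ in [a,b] such that f(s₁) = f(s₃), f(s₂) = f(s₄), and f(s₁) ≠ f(s₂). -/
open Set

/-!
The zigzag is low–high–low–high, with the interior local minimum `t` as its third point: `f` takes
values above `f t` on both sides of `t`, and climbs on the left of `t` from a value at most `f t`.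
The intermediate value theorem on the left of `t` yields the first two points, at the level `f t`
and at a level reached on both sides of `t`; on the right of `t` it yields the fourth.
-/

open Filter Topology

variable {α β : Type*}

/-- `f` is constant on no nondegenerate closed interval contained in `s`. The notion is meant for
intervals `s`; it is void for a set `s` containing no such interval. -/
def NowhereConstantOn [Preorder α] (f : α → β) (s : Set α) : Prop :=
  ∀ ⦃c d : α⦄, c < d → Icc c d ⊆ s → ¬ ∀ x ∈ Icc c d, ∀ y ∈ Icc c d, f x = f y

/-- The graph of `f` over `s` contains four points alternating between two distinct values. Either
value may be the larger one, so this covers both low–high–low–high and high–low–high–low. -/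
def HasZigzagOn [LT α] (f : α → β) (s : Set α) : Prop :=
  ∃ s₁ s₂ s₃ s₄ : α, s₁ ∈ s ∧ s₂ ∈ s ∧ s₃ ∈ s ∧ s₄ ∈ s ∧ s₁ < s₂ ∧ s₂ < s₃ ∧ s₃ < s₄ ∧
    f s₁ = f s₃ ∧ f s₂ = f s₄ ∧ f s₁ ≠ f s₂

section NowhereConstant

variable [LinearOrder α] [DenselyOrdered α] [TopologicalSpace α] [OrderTopology α]
  {f : α → β} {s : Set α} {c d t : α}

theorem exists_Icc_subset_inter_of_mem_nhdsWithin_Icc {u : Set α} (hcd : c < d)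
    (ht : t ∈ Icc c d) (hu : u ∈ 𝓝[Icc c d] t) :
    ∃ c' d', c' < d' ∧ Icc c' d' ⊆ Icc c d ∩ u := by
  have hinter : Icc c d ∩ u ∈ 𝓝[Icc c d] t := inter_mem self_mem_nhdsWithin hu
  rcases ht.1.eq_or_lt with rfl | hct
  · rw [nhdsWithin_Icc_eq_nhdsGE hcd] at hinter
    obtain ⟨e, hce, hsub⟩ := (mem_nhdsGE_iff_exists_Ico_subset' hcd).1 hinter
    obtain ⟨d', hcd', hd'e⟩ := exists_between hce
    exact ⟨c, d', hcd', (Icc_subset_Ico_right hd'e).trans hsub⟩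
  · have hleft : Icc c d ∩ u ∈ 𝓝[≤] t := by
      rw [← nhdsWithin_Icc_eq_nhdsLE hct]
      exact nhdsWithin_mono t (Icc_subset_Icc_right ht.2) hinter
    obtain ⟨e, het, hsub⟩ := (mem_nhdsLE_iff_exists_Ioc_subset' hct).1 hleft
    obtain ⟨c', hec', hc't⟩ := exists_between het
    exact ⟨c', t, hc't, (Icc_subset_Ioc_left hec').trans hsub⟩

theorem NowhereConstantOn.frequently_ne (hf : NowhereConstantOn f s) (hcd : c < d)
    (hs : Icc c d ⊆ s) (ht : t ∈ Icc c d) : ∃ᶠ x in 𝓝[Icc c d] t, f x ≠ f t := by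
  intro hconst
  simp only [not_not] at hconst
  obtain ⟨c', d', hcd', hsub⟩ :=
    exists_Icc_subset_inter_of_mem_nhdsWithin_Icc hcd ht hconst
  exact hf hcd' (fun x hx ↦ hs (hsub hx).1) fun x hx y hy ↦
    (hsub hx).2.trans (hsub hy).2.symm

theorem NowhereConstantOn.frequently_lt_of_isLocalMinOn [PartialOrder β]
    (hf : NowhereConstantOn f s) (hmin : IsLocalMinOn f s t) (hcd : c < d) (hs : Icc c d ⊆ s)
    (ht : t ∈ Icc c d) : ∃ᶠ x in 𝓝[Icc c d] t, f t < f x :=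
  ((hf.frequently_ne hcd hs ht).and_eventually (hmin.on_subset hs)).mono fun _ hx ↦
    hx.2.lt_of_ne hx.1.symm

theorem NowhereConstantOn.exists_lt_of_isLocalMinOn [PartialOrder β]
    (hf : NowhereConstantOn f s) (hmin : IsLocalMinOn f s t) (hcd : c < d) (hs : Icc c d ⊆ s)
    (ht : t ∈ Icc c d) : ∃ x ∈ Icc c d, f t < f x :=
  ((hf.frequently_lt_of_isLocalMinOn hmin hcd hs ht).and_eventually
    self_mem_nhdsWithin).exists.imp fun _ hx ↦ hx.symm

end NowhereConstant

section Zigzag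

variable [ConditionallyCompleteLinearOrder α] [DenselyOrdered α] [TopologicalSpace α]
  [OrderTopology α] [LinearOrder β] [TopologicalSpace β] [OrderClosedTopology β]
  {f : α → β} {a b p q t : α}

theorem hasZigzagOn_Icc_of_le_of_lt_of_lt (hf : ContinuousOn f (Icc a b)) (hp : p ∈ Icc a t)
    (hq : q ∈ Icc t b) (hat : f a ≤ f t) (htp : f t < f p) (htq : f t < f q) :
    HasZigzagOn f (Icc a b) := by
  have ht : t ∈ Icc a b := ⟨hp.1.trans hp.2, hq.1.trans hq.2⟩
  have hpb : p ≤ b := hp.2.trans ht.2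
  have hlevel : f t < min (f p) (f q) := lt_min htp htq
  obtain ⟨s₁, ⟨has₁, hs₁p⟩, hfs₁⟩ : f t ∈ f '' Icc a p :=
    intermediate_value_Icc hp.1 (hf.mono (Icc_subset_Icc_right hpb)) ⟨hat, htp.le⟩
  obtain ⟨s₂, ⟨hs₁s₂, hs₂p⟩, hfs₂⟩ : min (f p) (f q) ∈ f '' Icc s₁ p :=
    intermediate_value_Icc hs₁p (hf.mono (Icc_subset_Icc has₁ hpb))
      ⟨hfs₁.trans_le hlevel.le, min_le_left _ _⟩
  obtain ⟨s₄, ⟨hts₄, hs₄q⟩, hfs₄⟩ : min (f p) (f q) ∈ f '' Icc t q :=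
    intermediate_value_Icc hq.1 (hf.mono (Icc_subset_Icc ht.1 hq.2))
      ⟨hlevel.le, min_le_right _ _⟩
  have hne₁₂ : f s₁ ≠ f s₂ := by rw [hfs₁, hfs₂]; exact hlevel.ne
  have hne₂t : f s₂ ≠ f t := hfs₂.trans_ne hlevel.ne'
  have hnet₄ : f t ≠ f s₄ := hlevel.ne.trans_eq hfs₄.symm
  exact ⟨s₁, s₂, t, s₄, ⟨has₁, hs₁p.trans hpb⟩, ⟨has₁.trans hs₁s₂, hs₂p.trans hpb⟩, ht,
    ⟨ht.1.trans hts₄, hs₄q.trans hq.2⟩, hs₁s₂.lt_of_ne (ne_of_apply_ne f hne₁₂),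
    (hs₂p.trans hp.2).lt_of_ne (ne_of_apply_ne f hne₂t), hts₄.lt_of_ne (ne_of_apply_ne f hnet₄),
    hfs₁, hfs₂.trans hfs₄.symm, hne₁₂⟩

theorem graph_lemma_general (hcont : ContinuousOn f (Icc a b))
    (hnc : NowhereConstantOn f (Icc a b)) (ht : t ∈ Ioo a b)
    (hmin : IsLocalMinOn f (Icc a b) t) (hat : f a ≤ f t) : HasZigzagOn f (Icc a b) := by
  obtain ⟨p, hp, htp⟩ : ∃ p ∈ Icc a t, f t < f p :=
    hnc.exists_lt_of_isLocalMinOn hmin ht.1 (Icc_subset_Icc_right ht.2.le)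
      (right_mem_Icc.2 ht.1.le)
  obtain ⟨q, hq, htq⟩ : ∃ q ∈ Icc t b, f t < f q :=
    hnc.exists_lt_of_isLocalMinOn hmin ht.2 (Icc_subset_Icc_left ht.1.le)
      (left_mem_Icc.2 ht.2.le)
  exact hasZigzagOn_Icc_of_le_of_lt_of_lt hcont hp hq hat htp htq

end Zigzag

/-- Graph lemma: a continuous, nowhere-constant function on `[a,b]` with
finitely many local extremum points, an interior local minimum, a global
minimum at `a`, and a global extremum at `b`, contains a zigzag of four
points alternating between two distinct values. -/
theorem graph_lemma (a b : ℝ) (hab : a < b) (f : ℝ → ℝ)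
    (hcont : ContinuousOn f (Icc a b))
    (hnc : ∀ c d : ℝ, a ≤ c → c < d → d ≤ b →
      ¬ ∀ s ∈ Icc c d, ∀ t ∈ Icc c d, f s = f t)
    (hfin : {t ∈ Icc a b |
      IsLocalMaxOn f (Icc a b) t ∨ IsLocalMinOn f (Icc a b) t}.Finite)
    (hintmin : ∃ t ∈ Ioo a b, IsLocalMinOn f (Icc a b) t)
    (hmina : ∀ t ∈ Icc a b, f a ≤ f t)
    (hextb : (∀ t ∈ Icc a b, f b ≤ f t) ∨ (∀ t ∈ Icc a b, f t ≤ f b)) :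
    ∃ s₁ s₂ s₃ s₄ : ℝ, s₁ ∈ Icc a b ∧ s₂ ∈ Icc a b ∧ s₃ ∈ Icc a b ∧
      s₄ ∈ Icc a b ∧ s₁ < s₂ ∧ s₂ < s₃ ∧ s₃ < s₄ ∧
      f s₁ = f s₃ ∧ f s₂ = f s₄ ∧ f s₁ ≠ f s₂ := by
  obtain ⟨t, ht, hmin⟩ := hintmin
  have hnc' : NowhereConstantOn f (Icc a b) := fun c d hcd hsub ↦
    have hle := (Icc_subset_Icc_iff hcd.le).1 hsub
    hnc c d hle.1 hcd hle.2
  exact graph_lemma_general hcont hnc' ht hmin (hmina t (Ioo_subset_Icc_self ht))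
end

section
/- Let a < b be real numbers and let f : [a,b] → ℝ be continuous, nowhere constant on [a,b], and such that the set E of local extremum points of f on [a,b] is finite. If t₁ < t₂ are points of E ∪ {a, b} such that no point of E lies in the open interval (t₁, t₂), then f is strictly monotone on the interval [t₁, t₂]. -/
open Set

/-!
If `f` took equal values at two points of `[t₁, t₂]`, the topological part of Rolle's theorem would
give a local extremum strictly between them. So `f` is injective on `[t₁, t₂]`, and a continuous
injective function on an interval is strictly monotone or strictly antitone.
-/

section

variable {X Y : Type*}
  [ConditionallyCompleteLinearOrder X] [DenselyOrdered X] [TopologicalSpace X] [OrderTopology X]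
  [LinearOrder Y] [TopologicalSpace Y] [OrderTopology Y]
  {f : X → Y} {t₁ t₂ : X}

theorem injOn_Icc_of_forall_not_isLocalExtr (hcont : ContinuousOn f (Icc t₁ t₂))
    (hext : ∀ t ∈ Ioo t₁ t₂, ¬ IsLocalExtr f t) : InjOn f (Icc t₁ t₂) := by
  intro x hx y hy hxy
  by_contra hne
  obtain ⟨c, hc, hfc⟩ :=
    exists_isLocalExtr_uIoo hne (hcont.mono (uIcc_subset_Icc hx hy)) hxy
  exact hext c (uIoo_subset_Ioo hx hy hc) hfc

theorem strict_mono_between_consecutive_extrema_general (hle : t₁ ≤ t₂)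
    (hcont : ContinuousOn f (Icc t₁ t₂)) (hext : ∀ t ∈ Ioo t₁ t₂, ¬ IsLocalExtr f t) :
    StrictMonoOn f (Icc t₁ t₂) ∨ StrictAntiOn f (Icc t₁ t₂) :=
  hcont.strictMonoOn_of_injOn_Icc' hle (injOn_Icc_of_forall_not_isLocalExtr hcont hext)

end

/-- Between consecutive local extrema (or endpoints), a continuous,
nowhere-constant function with finitely many local extremum points is
strictly monotone. -/
theorem strict_mono_between_consecutive_extrema (a b : ℝ) (hab : a < b)
    (f : ℝ → ℝ) (hcont : ContinuousOn f (Icc a b))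
    (hnc : ∀ c d : ℝ, a ≤ c → c < d → d ≤ b →
      ¬ ∀ s ∈ Icc c d, ∀ t ∈ Icc c d, f s = f t)
    (E : Set ℝ)
    (hE : E = {t ∈ Icc a b |
      IsLocalMaxOn f (Icc a b) t ∨ IsLocalMinOn f (Icc a b) t})
    (hfin : E.Finite)
    (t₁ t₂ : ℝ) (ht₁ : t₁ ∈ E ∪ {a, b}) (ht₂ : t₂ ∈ E ∪ {a, b})
    (hlt : t₁ < t₂) (hgap : ∀ t ∈ E, t ∉ Ioo t₁ t₂) :
    StrictMonoOn f (Icc t₁ t₂) ∨ StrictAntiOn f (Icc t₁ t₂) := by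
  have hends : E ∪ {a, b} ⊆ Icc a b := union_subset (hE.trans_subset (sep_subset _ _))
    (pair_subset (left_mem_Icc.2 hab.le) (right_mem_Icc.2 hab.le))
  have hsub : Icc t₁ t₂ ⊆ Icc a b := Icc_subset_Icc (hends ht₁).1 (hends ht₂).2
  exact strict_mono_between_consecutive_extrema_general hlt.le (hcont.mono hsub)
    fun t ht hext ↦ hgap t (hE ▸ ⟨hsub (Ioo_subset_Icc_self ht), (hext.on _).symm⟩) ht
end

section
/- Let a < b be real numbers and let f : [a,b] → ℝ be continuous, nowhere constant on [a,b], and such that the set E of local extremum points of f on [a,b] is finite. If t₁ < t₂ are points of E with no point of E in the open interval (t₁, t₂), and f has a local maximum on [a,b] at t₁, then f has a local minimum on [a,b] at t₂. -/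
open Set

/-!
If both consecutive extrema `t₁` and `t₂` were local maxima, a minimum point `m` of `f` over
`[t₁, t₂]` could not be an endpoint: there `f` would have a local maximum and a minimum at once,
hence be constant on a nondegenerate interval. So `m` lies in the open interval, where a minimum
over `[t₁, t₂]` is a local minimum of `f`, and `t₁`, `t₂` are not consecutive.
-/

open Filter Topology

section NowhereConst

variable {α β : Type*}

/-- `f` is nowhere constant on `s`: it is not constant on any nondegenerate interval contained in
`s`. Closed intervals suffice, since every nondegenerate interval contains one. -/
def NowhereConstOn [Preorder α] (f : α → β) (s : Set α) : Prop :=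
  ∀ ⦃c d : α⦄, c < d → Icc c d ⊆ s → ¬ ∀ x ∈ Icc c d, ∀ y ∈ Icc c d, f x = f y

theorem NowhereConstOn.mono [Preorder α] {f : α → β} {s t : Set α} (hf : NowhereConstOn f t)
    (hst : s ⊆ t) : NowhereConstOn f s :=
  fun _ _ hcd hsub => hf hcd (hsub.trans hst)

theorem nowhereConstOn_Icc [Preorder α] {f : α → β} {a b : α} :
    NowhereConstOn f (Icc a b) ↔ ∀ c d, a ≤ c → c < d → d ≤ b →
      ¬ ∀ x ∈ Icc c d, ∀ y ∈ Icc c d, f x = f y where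
  mp hf _ _ hac hcd hdb := hf hcd (Icc_subset_Icc hac hdb)
  mpr hf c d hcd hsub :=
    have ⟨hac, hdb⟩ := (Icc_subset_Icc_iff hcd.le).1 hsub
    hf c d hac hcd hdb

variable [LinearOrder α] [TopologicalSpace α] [OrderTopology α] [DenselyOrdered α]

theorem exists_Icc_subset_inter_of_mem_nhdsWithin {s u : Set α} {x : α} (hs : s.OrdConnected)
    (hs' : s.Nontrivial) (hx : x ∈ s) (hu : u ∈ 𝓝[s] x) :
    ∃ c d, c < d ∧ Icc c d ⊆ s ∩ u := by
  obtain ⟨y, hy, hyx⟩ := hs'.exists_ne x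
  rcases hyx.lt_or_gt with hyx | hxy
  · have hu' : s ∩ u ∈ 𝓝[≤] x := by
      rw [← nhdsWithin_Icc_eq_nhdsLE hyx]
      exact nhdsWithin_mono x (hs.out hy hx) (inter_mem self_mem_nhdsWithin hu)
    obtain ⟨l, hl, hlu⟩ := (mem_nhdsLE_iff_exists_mem_Ico_Ioc_subset hyx).1 hu'
    obtain ⟨c, hlc, hcx⟩ := exists_between hl.2
    exact ⟨c, x, hcx, fun z hz => hlu ⟨hlc.trans_le hz.1, hz.2⟩⟩
  · have hu' : s ∩ u ∈ 𝓝[≥] x := by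
      rw [← nhdsWithin_Icc_eq_nhdsGE hxy]
      exact nhdsWithin_mono x (hs.out hx hy) (inter_mem self_mem_nhdsWithin hu)
    obtain ⟨r, hr, hru⟩ := (mem_nhdsGE_iff_exists_mem_Ioc_Ico_subset hxy).1 hu'
    obtain ⟨d, hxd, hdr⟩ := exists_between hr.1
    exact ⟨x, d, hxd, fun z hz => hru ⟨hz.1, hz.2.trans_lt hdr⟩⟩

theorem NowhereConstOn.not_eventually_eq {f : α → β} {s : Set α} {x : α}
    (hf : NowhereConstOn f s) (hs : s.OrdConnected) (hs' : s.Nontrivial) (hx : x ∈ s) :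
    ¬ ∀ᶠ y in 𝓝[s] x, f y = f x := by
  intro hconst
  obtain ⟨c, d, hcd, hsub⟩ := exists_Icc_subset_inter_of_mem_nhdsWithin hs hs' hx hconst
  exact hf hcd (hsub.trans inter_subset_left)
    fun y hy z hz => (hsub hy).2.trans (hsub hz).2.symm

theorem NowhereConstOn.not_isLocalMinOn_of_isLocalMaxOn [PartialOrder β] {f : α → β} {s : Set α}
    {x : α} (hf : NowhereConstOn f s) (hs : s.OrdConnected) (hs' : s.Nontrivial) (hx : x ∈ s)
    (hmax : IsLocalMaxOn f s x) : ¬ IsLocalMinOn f s x := fun hmin =>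
  hf.not_eventually_eq hs hs' hx <| (Eventually.and hmax hmin).mono fun _ h => le_antisymm h.1 h.2

variable [CompactIccSpace α] [LinearOrder β] [TopologicalSpace β] [ClosedIicTopology β]

theorem NowhereConstOn.exists_isLocalMin_mem_Ioo {f : α → β} {a b : α}
    (hf : NowhereConstOn f (Icc a b)) (hcont : ContinuousOn f (Icc a b)) (hab : a < b)
    (ha : IsLocalMaxOn f (Icc a b) a) (hb : IsLocalMaxOn f (Icc a b) b) :
    ∃ m ∈ Ioo a b, IsLocalMin f m := by
  obtain ⟨m, hm, hmin⟩ := isCompact_Icc.exists_isMinOn (nonempty_Icc.2 hab.le) hcont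
  have hab' : (Icc a b).Nontrivial :=
    nontrivial_of_lt (left_mem_Icc.2 hab.le) (right_mem_Icc.2 hab.le) hab
  have hm_not_max : ¬ IsLocalMaxOn f (Icc a b) m := fun hmax =>
    hf.not_isLocalMinOn_of_isLocalMaxOn ordConnected_Icc hab' hm hmax hmin.localize
  have ham : a < m := hm.1.lt_of_ne fun h => hm_not_max (h ▸ ha)
  have hmb : m < b := hm.2.lt_of_ne fun h => hm_not_max (h ▸ hb)
  exact ⟨m, ⟨ham, hmb⟩, hmin.isLocalMin (Icc_mem_nhds ham hmb)⟩

theorem extrema_alternate_general {f : α → β} {s : Set α} {t₁ t₂ : α} (hs : s.OrdConnected)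
    (hcont : ContinuousOn f s) (hf : NowhereConstOn f s) (ht₁ : t₁ ∈ s) (ht₂ : t₂ ∈ s)
    (hlt : t₁ < t₂) (hgap : ∀ t ∈ Ioo t₁ t₂, ¬ IsLocalExtrOn f s t)
    (hmax : IsLocalMaxOn f s t₁) (hextr : IsLocalExtrOn f s t₂) :
    IsLocalMinOn f s t₂ := by
  refine hextr.resolve_right fun (hmax₂ : IsLocalMaxOn f s t₂) => ?_
  have hsub : Icc t₁ t₂ ⊆ s := hs.out ht₁ ht₂
  obtain ⟨m, hm, hmin⟩ := (hf.mono hsub).exists_isLocalMin_mem_Ioo (hcont.mono hsub) hlt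
    (hmax.on_subset hsub) (hmax₂.on_subset hsub)
  exact hgap m hm (.inl (hmin.on s))

end NowhereConst

/-- Consecutive local extrema of a continuous, nowhere-constant function with
finitely many local extremum points alternate in type: after a local maximum,
the next extremum is a local minimum. -/
theorem extrema_alternate (a b : ℝ) (hab : a < b)
    (f : ℝ → ℝ) (hcont : ContinuousOn f (Icc a b))
    (hnc : ∀ c d : ℝ, a ≤ c → c < d → d ≤ b →
      ¬ ∀ s ∈ Icc c d, ∀ t ∈ Icc c d, f s = f t)
    (E : Set ℝ)
    (hE : E = {t ∈ Icc a b |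
      IsLocalMaxOn f (Icc a b) t ∨ IsLocalMinOn f (Icc a b) t})
    (hfin : E.Finite)
    (t₁ t₂ : ℝ) (ht₁ : t₁ ∈ E) (ht₂ : t₂ ∈ E) (hlt : t₁ < t₂)
    (hgap : ∀ t ∈ E, t ∉ Ioo t₁ t₂)
    (hmax : IsLocalMaxOn f (Icc a b) t₁) :
    IsLocalMinOn f (Icc a b) t₂ := by
  subst hE
  have hsub : Ioo t₁ t₂ ⊆ Icc a b := Ioo_subset_Icc_self.trans (Icc_subset_Icc ht₁.1.1 ht₂.1.2)
  exact extrema_alternate_general ordConnected_Icc hcont (nowhereConstOn_Icc.2 hnc) ht₁.1 ht₂.1 hlt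
    (fun t ht hextr => hgap t ⟨hsub ht, hextr.symm⟩ ht) hmax ht₂.2.symm
end

section
/- Let a ≤ b be real numbers, let f : [a,b] → ℝ be continuous, and let u₁ < u₂ < u₃ < u₄ be points of [a,b] such that f(u₁) < f(u₂), f(u₁) < f(u₄), f(u₃) < f(u₂), and f(u₃) < f(u₄). Then there exist points s₁ < s₂ < s₃ < s₄ in [u₁, u₄] such that f(s₁) = f(s₃), f(s₂) = f(s₄), and f(s₁) < f(s₂). -/
open Set

/-!
Let `c` be the larger of the two lows `f u₁, f u₃` and `d` the smaller of the two highs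
`f u₂, f u₄`; the four inequalities between lows and highs say exactly that `c < d`. On each of
the disjoint intervals `[u₁, u₂]` and `[u₃, u₄]` the function rises from at most `c` to at least
`d`, so it takes the value `c` and, further to the right, the value `d`.
-/

section Crossing

variable {α β : Type*} [ConditionallyCompleteLinearOrder α] [TopologicalSpace α]
  [OrderTopology α] [DenselyOrdered α] [LinearOrder β] [TopologicalSpace β]
  [OrderClosedTopology β] {f : α → β}

theorem exists_upcrossing_of_continuousOn {u v : α} {c d : β} (huv : u ≤ v)
    (hf : ContinuousOn f (Icc u v)) (hc : f u ≤ c) (hcd : c < d) (hd : d ≤ f v) :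
    ∃ s ∈ Icc u v, ∃ t ∈ Icc u v, s < t ∧ f s = c ∧ f t = d := by
  obtain ⟨s, hs, rfl⟩ := intermediate_value_Icc huv hf ⟨hc, hcd.le.trans hd⟩
  have hsv : Icc s v ⊆ Icc u v := Icc_subset_Icc_left hs.1
  obtain ⟨t, ht, rfl⟩ := intermediate_value_Icc hs.2 (hf.mono hsv) ⟨hcd.le, hd⟩
  exact ⟨s, hs, t, hsv ht, ht.1.lt_of_ne (ne_of_apply_ne f hcd.ne), rfl, rfl⟩

theorem zigzag_of_oscillation_general {u₁ u₂ u₃ u₄ : α}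
    (hcont₁₂ : ContinuousOn f (Icc u₁ u₂)) (hcont₃₄ : ContinuousOn f (Icc u₃ u₄))
    (h12 : u₁ < u₂) (h23 : u₂ < u₃) (h34 : u₃ < u₄)
    (hf12 : f u₁ < f u₂) (hf14 : f u₁ < f u₄)
    (hf32 : f u₃ < f u₂) (hf34 : f u₃ < f u₄) :
    ∃ s₁ s₂ s₃ s₄ : α, s₁ ∈ Icc u₁ u₄ ∧ s₂ ∈ Icc u₁ u₄ ∧ s₃ ∈ Icc u₁ u₄ ∧
      s₄ ∈ Icc u₁ u₄ ∧ s₁ < s₂ ∧ s₂ < s₃ ∧ s₃ < s₄ ∧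
      f s₁ = f s₃ ∧ f s₂ = f s₄ ∧ f s₁ < f s₂ := by
  have hlevels : max (f u₁) (f u₃) < min (f u₂) (f u₄) :=
    max_lt (lt_min hf12 hf14) (lt_min hf32 hf34)
  obtain ⟨s₁, hs₁, s₂, hs₂, hs₁₂, hfs₁, hfs₂⟩ :=
    exists_upcrossing_of_continuousOn h12.le hcont₁₂ (le_max_left _ _) hlevels (min_le_left _ _)
  obtain ⟨s₃, hs₃, s₄, hs₄, hs₃₄, hfs₃, hfs₄⟩ :=
    exists_upcrossing_of_continuousOn h34.le hcont₃₄ (le_max_right _ _) hlevels (min_le_right _ _)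
  have hleft : Icc u₁ u₂ ⊆ Icc u₁ u₄ := Icc_subset_Icc_right (h23.trans h34).le
  have hright : Icc u₃ u₄ ⊆ Icc u₁ u₄ := Icc_subset_Icc_left (h12.trans h23).le
  have hs₂₃ : s₂ < s₃ := hs₂.2.trans_lt (h23.trans_le hs₃.1)
  exact ⟨s₁, s₂, s₃, s₄, hleft hs₁, hleft hs₂, hright hs₃, hright hs₄, hs₁₂, hs₂₃, hs₃₄,
    hfs₁.trans hfs₃.symm, hfs₂.trans hfs₄.symm, by rwa [hfs₁, hfs₂]⟩

end Crossing

/-- Intermediate-value step of the graph lemma: a continuous function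
exhibiting a rough low–high–low–high oscillation contains four points
alternating exactly between two fixed values. -/
theorem zigzag_of_oscillation (a b : ℝ) (hab : a ≤ b) (f : ℝ → ℝ)
    (hcont : ContinuousOn f (Icc a b))
    (u₁ u₂ u₃ u₄ : ℝ)
    (hu₁ : u₁ ∈ Icc a b) (hu₂ : u₂ ∈ Icc a b) (hu₃ : u₃ ∈ Icc a b)
    (hu₄ : u₄ ∈ Icc a b)
    (h12 : u₁ < u₂) (h23 : u₂ < u₃) (h34 : u₃ < u₄)
    (hf12 : f u₁ < f u₂) (hf14 : f u₁ < f u₄)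
    (hf32 : f u₃ < f u₂) (hf34 : f u₃ < f u₄) :
    ∃ s₁ s₂ s₃ s₄ : ℝ, s₁ ∈ Icc u₁ u₄ ∧ s₂ ∈ Icc u₁ u₄ ∧ s₃ ∈ Icc u₁ u₄ ∧
      s₄ ∈ Icc u₁ u₄ ∧ s₁ < s₂ ∧ s₂ < s₃ ∧ s₃ < s₄ ∧
      f s₁ = f s₃ ∧ f s₂ = f s₄ ∧ f s₁ < f s₂ :=
  zigzag_of_oscillation_general (hcont.mono (Icc_subset_Icc hu₁.1 hu₂.2))
    (hcont.mono (Icc_subset_Icc hu₃.1 hu₄.2)) h12 h23 h34 hf12 hf14 hf32 hf34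
end
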